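/- arXiv:2512.08258 — 5 statements merged into one kernel-verified Lean document; each statement's English description precedes it below -/
import Mathlib

section
/- Let b > 0 and let R denote the cumulative distribution function of U + e, where U is uniformly distributed on (0,1) and e has the Laplace density f_b(x) = (b/2)·exp(−b|x|) on ℝ, with U and e independent. Then R is given explicitly by: R(x) = (1/(2b))·e^{bx}·(1 − e^{−b}) for x < 0; R(x) = x + (1/(2b))·(e^{−bx} − e^{−b(1−x)}) for 0 ≤ x ≤ 1; and R(x) = 1 − (1/(2b))·e^{−b(x−1)}·(1 − e^{−b}) for x > 1. -/
open MeasureTheory ProbabilityTheory Real Set Filter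

noncomputable section

/-- The density of the Laplace distribution with location `0` and scale parameter `b`:
`f_b(x) = (b/2) exp(-b|x|)`. -/
def laplacePDF (b x : ℝ) : ℝ := b / 2 * Real.exp (-b * |x|)

/-- The Laplace(0, b) measure on `ℝ`. -/
def laplaceMeasure (b : ℝ) : Measure ℝ :=
  volume.withDensity fun x => ENNReal.ofReal (laplacePDF b x)

/-- The uniform distribution on the interval `(0,1)`. -/
def unifMeasure : Measure ℝ := volume.restrict (Set.Ioo 0 1)

lemma lap_Iic_neg (b : ℝ) (hb : 0 < b) (t : ℝ) (ht : t ≤ 0) :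
    (laplaceMeasure b (Iic t)).toReal = Real.exp (b * t) / 2 := by
  have hi : IntegrableOn (fun x => b / 2 * Real.exp (b * x)) (Iic t) :=
    (integrableOn_exp_mul_Iic hb t).const_mul _
  have h1 : laplaceMeasure b (Iic t)
      = ∫⁻ x in Iic t, ENNReal.ofReal (b / 2 * Real.exp (b * x)) := by
    rw [laplaceMeasure, withDensity_apply _ measurableSet_Iic]
    refine setLIntegral_congr_fun measurableSet_Iic ?_
    intro x hx
    have hx' : x ≤ t := hx
    simp only [laplacePDF]
    rw [abs_of_nonpos (hx'.trans ht)]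
    congr 3
    ring
  rw [h1, ← ofReal_integral_eq_lintegral_ofReal hi (Eventually.of_forall fun x => by positivity),
    integral_const_mul, integral_exp_mul_Iic hb, ENNReal.toReal_ofReal (by positivity)]
  field_simp

lemma lap_Ioi_pos (b : ℝ) (hb : 0 < b) (t : ℝ) (ht : 0 ≤ t) :
    (laplaceMeasure b (Ioi t)).toReal = Real.exp (-b * t) / 2 := by
  have hb' : -b < 0 := by linarith
  have hi : IntegrableOn (fun x => b / 2 * Real.exp (-b * x)) (Ioi t) :=
    (integrableOn_exp_mul_Ioi hb' t).const_mul _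
  have h1 : laplaceMeasure b (Ioi t)
      = ∫⁻ x in Ioi t, ENNReal.ofReal (b / 2 * Real.exp (-b * x)) := by
    rw [laplaceMeasure, withDensity_apply _ measurableSet_Ioi]
    refine setLIntegral_congr_fun measurableSet_Ioi ?_
    intro x hx
    have hx' : t < x := hx
    simp only [laplacePDF]
    rw [abs_of_nonneg (ht.trans hx'.le)]
  rw [h1, ← ofReal_integral_eq_lintegral_ofReal hi (Eventually.of_forall fun x => by positivity),
    integral_const_mul, integral_exp_mul_Ioi hb']
  have : b / 2 * (-Real.exp (-b * t) / -b) = Real.exp (-b * t) / 2 := by field_simp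
  rw [this, ENNReal.toReal_ofReal (by positivity)]

lemma lap_Iic_pos (b : ℝ) (hb : 0 < b) [IsProbabilityMeasure (laplaceMeasure b)]
    (t : ℝ) (ht : 0 ≤ t) :
    (laplaceMeasure b (Iic t)).toReal = 1 - Real.exp (-b * t) / 2 := by
  have h := probReal_compl_eq_one_sub (μ := laplaceMeasure b) (measurableSet_Ioi (a := t))
  rw [compl_Ioi] at h
  simp only [Measure.real] at h
  rw [h, lap_Ioi_pos b hb t ht]

def antiH (b t : ℝ) : ℝ := max t 0 + Real.exp (-b * |t|) / (2 * b)

lemma antiH_deriv (b : ℝ) (hb : 0 < b) [IsProbabilityMeasure (laplaceMeasure b)]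
    (t : ℝ) (ht : t ≠ 0) :
    HasDerivAt (antiH b) (laplaceMeasure b (Iic t)).toReal t := by
  rcases lt_or_gt_of_ne ht with h | h
  · rw [lap_Iic_neg b hb t h.le]
    have h0 : HasDerivAt (fun s : ℝ => Real.exp (b * s) / (2 * b)) (Real.exp (b * t) / 2) t := by
      have := (((hasDerivAt_id t).const_mul b).exp).div_const (2 * b)
      refine this.congr_deriv ?_
      simp only [id]
      field_simp
    refine h0.congr_of_eventuallyEq ?_
    filter_upwards [Iio_mem_nhds h] with s hs
    have hs' : s < 0 := hs
    simp [antiH, max_eq_right hs'.le, abs_of_neg hs']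
  · rw [lap_Iic_pos b hb t h.le]
    have h0 : HasDerivAt (fun s : ℝ => s + Real.exp (-b * s) / (2 * b))
        (1 - Real.exp (-b * t) / 2) t := by
      have := (hasDerivAt_id t).add ((((hasDerivAt_id t).const_mul (-b)).exp).div_const (2 * b))
      refine this.congr_deriv ?_
      simp only [id]
      field_simp
      ring
    refine h0.congr_of_eventuallyEq ?_
    filter_upwards [Ioi_mem_nhds h] with s hs
    have hs' : 0 < s := hs
    simp [antiH, max_eq_left hs'.le, abs_of_pos hs']

lemma int_eq (b : ℝ) (hb : 0 < b) [IsProbabilityMeasure (laplaceMeasure b)] (x : ℝ) :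
    ∫ u in Ioo (0:ℝ) 1, (laplaceMeasure b (Iic (x - u))).toReal
      = antiH b x - antiH b (x - 1) := by
  have hmono : Monotone fun t : ℝ => (laplaceMeasure b (Iic t)).toReal := fun s t hst =>
    ENNReal.toReal_mono (measure_ne_top _ _) (measure_mono (Iic_subset_Iic.2 hst))
  rw [← integral_Ioc_eq_integral_Ioo, ← intervalIntegral.integral_of_le zero_le_one,
    intervalIntegral.integral_comp_sub_left (fun t => (laplaceMeasure b (Iic t)).toReal), sub_zero]
  refine integral_eq_of_hasDerivAt_off_countable (antiH b) _ (countable_singleton (0:ℝ)) ?_ ?_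
    hmono.intervalIntegrable
  · apply Continuous.continuousOn
    unfold antiH
    fun_prop
  · intro t ht
    exact antiH_deriv b hb t ht.2

/-- explicit formula for the cdf `R` of `U + e` where `U ~ Uniform(0,1)` and
`e ~ Laplace(0,b)` are independent. -/
theorem cdf_uniform_add_laplace
    {Ω : Type*} [MeasurableSpace Ω] (P : Measure Ω) [IsProbabilityMeasure P]
    (b : ℝ) (hb : 0 < b)
    (U e : Ω → ℝ) (hUm : Measurable U) (hem : Measurable e)
    (hU : Measure.map U P = unifMeasure)
    (he : Measure.map e P = laplaceMeasure b)
    (hind : IndepFun U e P)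
    (R : ℝ → ℝ) (hR : ∀ x, R x = (P {ω | U ω + e ω ≤ x}).toReal) :
    (∀ x : ℝ, x < 0 →
        R x = 1 / (2 * b) * Real.exp (b * x) * (1 - Real.exp (-b))) ∧
    (∀ x : ℝ, 0 ≤ x → x ≤ 1 →
        R x = x + 1 / (2 * b) * (Real.exp (-b * x) - Real.exp (-b * (1 - x)))) ∧
    (∀ x : ℝ, 1 < x →
        R x = 1 - 1 / (2 * b) * Real.exp (-b * (x - 1)) * (1 - Real.exp (-b))) := by
  haveI : IsProbabilityMeasure (laplaceMeasure b) := by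
    rw [← he]; exact Measure.isProbabilityMeasure_map hem.aemeasurable
  haveI : IsProbabilityMeasure unifMeasure := by
    rw [← hU]; exact Measure.isProbabilityMeasure_map hUm.aemeasurable
  have key : ∀ x, R x = antiH b x - antiH b (x - 1) := by
    intro x
    have hS : MeasurableSet {p : ℝ × ℝ | p.1 + p.2 ≤ x} :=
      measurableSet_le (by fun_prop) (by fun_prop)
    have h1 : P {ω | U ω + e ω ≤ x} = ∫⁻ u in Ioo (0:ℝ) 1, laplaceMeasure b (Iic (x - u)) := by
      have h2 := (indepFun_iff_map_prod_eq_prod_map_map hUm.aemeasurable hem.aemeasurable).1 hind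
      have h3 : P {ω | U ω + e ω ≤ x}
          = Measure.map (fun ω => (U ω, e ω)) P {p : ℝ × ℝ | p.1 + p.2 ≤ x} := by
        rw [Measure.map_apply (hUm.prodMk hem) hS]; rfl
      rw [h3, h2, hU, he, Measure.prod_apply hS, unifMeasure]
      congr 1
      ext u
      congr 1
      ext v
      simp only [mem_preimage, mem_setOf_eq, mem_Iic]
      constructor <;> intro h <;> linarith
    have hanti : Antitone fun u : ℝ => laplaceMeasure b (Iic (x - u)) := fun s t hst =>
      measure_mono (Iic_subset_Iic.2 (by linarith))
    rw [hR, h1, ← int_eq b hb x, integral_toReal hanti.measurable.aemeasurable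
      (Eventually.of_forall fun u => measure_lt_top _ _)]
  refine ⟨fun x hx => ?_, fun x h0 h1 => ?_, fun x hx => ?_⟩
  · rw [key, antiH, antiH, max_eq_right hx.le, max_eq_right (by linarith), abs_of_neg hx,
      abs_of_neg (by linarith)]
    have e1 : Real.exp (-b * -(x - 1)) = Real.exp (b * x) * Real.exp (-b) := by
      rw [← Real.exp_add]; congr 1; ring
    have e2 : -b * -x = b * x := by ring
    rw [e1, e2]; ring
  · rw [key, antiH, antiH, max_eq_left h0, max_eq_right (by linarith), abs_of_nonneg h0,
      abs_of_nonpos (by linarith)]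
    have e2 : -(x - 1) = 1 - x := by ring
    rw [e2]; ring
  · rw [key, antiH, antiH, max_eq_left (by linarith), max_eq_left (by linarith),
      abs_of_pos (by linarith), abs_of_pos (by linarith)]
    have e1 : Real.exp (-b * x) = Real.exp (-b * (x - 1)) * Real.exp (-b) := by
      rw [← Real.exp_add]; congr 1; ring
    rw [e1]; ring

end
end

section
/- Let γ > 0, β > 0, b > 0. Let Z be a random variable with the generalized Pareto distribution GPD(γ,β), let e ~ Laplace(0,b) be independent of Z, let R denote the cumulative distribution function of U + e′ with U ~ Uniform(0,1) and e′ ~ Laplace(0,b) independent, and set H(x) = G_{γ,β}^{−1}(R(x)) where G_{γ,β}^{−1} is the inverse of the cdf of GPD(γ,β) on (0,1). Then the perturbed variable Z* = H(G_{γ,β}(Z) + e) again has the generalized Pareto distribution GPD(γ,β). -/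
open MeasureTheory ProbabilityTheory Real Set Filter

noncomputable section

/-- The cdf of the generalized Pareto distribution GPD(γ, β). -/
def gpdCDF (γ β y : ℝ) : ℝ := if y < 0 then 0 else 1 - (1 + γ * y / β) ^ (-(1 / γ))

/-- The inverse on `(0,1)` of the cdf of GPD(γ, β):
`G_{γ,β}^{-1}(p) = (β/γ)((1-p)^{-γ} - 1)`. -/
def gpdCDFInv (γ β p : ℝ) : ℝ := β / γ * ((1 - p) ^ (-γ) - 1)

lemma gpd_strictMonoOn {γ β : ℝ} (hγ : 0 < γ) (hβ : 0 < β) :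
    StrictMonoOn (gpdCDF γ β) (Set.Ici 0) := by
  intro a ha c hc hac
  have ha' : ¬ a < 0 := not_lt.2 ha
  have hc' : ¬ c < 0 := not_lt.2 hc
  have ha0 : 0 ≤ a := ha
  simp only [gpdCDF, if_neg ha', if_neg hc']
  have h1 : 0 < 1 + γ * a / β := by positivity
  have h2 : 1 + γ * a / β < 1 + γ * c / β := by gcongr
  have h3 : -(1 / γ) < 0 := by
    have : 0 < 1 / γ := by positivity
    linarith
  have := Real.rpow_lt_rpow_of_neg h1 h2 h3
  linarith

lemma gpdInv_pos {γ β p : ℝ} (hγ : 0 < γ) (hβ : 0 < β) (hp : 0 < p) (hp1 : p < 1) :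
    0 < gpdCDFInv γ β p := by
  have h : 1 < (1 - p) ^ (-γ) :=
    Real.one_lt_rpow_of_pos_of_lt_one_of_neg (by linarith) (by linarith) (by linarith)
  unfold gpdCDFInv
  have : 0 < (1 - p) ^ (-γ) - 1 := by linarith
  positivity

lemma gpd_gpdInv {γ β p : ℝ} (hγ : 0 < γ) (hβ : 0 < β) (hp : 0 < p) (hp1 : p < 1) :
    gpdCDF γ β (gpdCDFInv γ β p) = p := by
  have h := gpdInv_pos hγ hβ hp hp1
  simp only [gpdCDF, if_neg (not_lt.2 h.le)]
  have h1 : 1 + γ * gpdCDFInv γ β p / β = (1 - p) ^ (-γ) := by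
    unfold gpdCDFInv
    field_simp
    ring
  rw [h1, ← Real.rpow_mul (by linarith)]
  have : -γ * -(1 / γ) = 1 := by field_simp
  rw [this, Real.rpow_one]
  ring

lemma gpdInv_le_iff {γ β p : ℝ} (hγ : 0 < γ) (hβ : 0 < β) (hp : 0 < p) (hp1 : p < 1) (y : ℝ) :
    gpdCDFInv γ β p ≤ y ↔ p ≤ gpdCDF γ β y := by
  have h := gpdInv_pos hγ hβ hp hp1
  rcases lt_or_ge y 0 with hy | hy
  · simp only [gpdCDF, if_pos hy]
    constructor <;> intro _ <;> linarith
  · have := (gpd_strictMonoOn hγ hβ).le_iff_le (a := gpdCDFInv γ β p) (b := y) h.le hy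
    rw [← this, gpd_gpdInv hγ hβ hp hp1]

lemma le_gpdInv_iff {γ β p : ℝ} (hγ : 0 < γ) (hβ : 0 < β) (hp : 0 < p) (hp1 : p < 1) (y : ℝ) :
    gpdCDF γ β y ≤ p ↔ y ≤ gpdCDFInv γ β p := by
  have h := gpdInv_pos hγ hβ hp hp1
  rcases lt_or_ge y 0 with hy | hy
  · simp only [gpdCDF, if_pos hy]
    constructor <;> intro _ <;> linarith
  · have := (gpd_strictMonoOn hγ hβ).le_iff_le (a := y) (b := gpdCDFInv γ β p) hy h.le
    rw [← this, gpd_gpdInv hγ hβ hp hp1]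

lemma gpd_mem {γ β : ℝ} (hγ : 0 < γ) (hβ : 0 < β) (y : ℝ) :
    0 ≤ gpdCDF γ β y ∧ gpdCDF γ β y ≤ 1 := by
  rcases lt_or_ge y 0 with hy | hy
  · simp [gpdCDF, if_pos hy]
  · simp only [gpdCDF, if_neg (not_lt.2 hy)]
    have h1 : 1 ≤ 1 + γ * y / β := by
      have : 0 ≤ γ * y / β := by positivity
      linarith
    have h2 : (1 + γ * y / β) ^ (-(1 / γ)) ≤ 1 :=
      Real.rpow_le_one_of_one_le_of_nonpos h1 (by
        have : 0 < 1 / γ := by positivity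
        linarith)
    have h3 : 0 ≤ (1 + γ * y / β) ^ (-(1 / γ)) := Real.rpow_nonneg (by linarith) _
    constructor <;> linarith

lemma measurable_gpd (γ β : ℝ) : Measurable (gpdCDF γ β) := by
  unfold gpdCDF
  refine Measurable.ite measurableSet_Iio measurable_const ?_
  exact measurable_const.sub (Measurable.pow_const (by fun_prop) _)

lemma unif_Iic {x : ℝ} (h0 : 0 ≤ x) (h1 : x ≤ 1) : unifMeasure (Iic x) = ENNReal.ofReal x := by
  unfold unifMeasure
  rw [← Measure.restrict_congr_set (Ioc_ae_eq_Icc.trans Ioo_ae_eq_Icc.symm :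
    (Ioc (0:ℝ) 1 : Set ℝ) =ᵐ[volume] Ioo 0 1), Measure.restrict_apply measurableSet_Iic]
  have : Iic x ∩ Ioc 0 1 = Ioc 0 x := by
    ext t
    simp only [mem_inter_iff, mem_Iic, mem_Ioc]
    constructor
    · rintro ⟨a, b, c⟩; exact ⟨b, a⟩
    · rintro ⟨a, b⟩; exact ⟨b, a, b.trans h1⟩
  rw [this]
  simp

instance : IsProbabilityMeasure unifMeasure := ⟨by simp [unifMeasure]⟩

lemma eq_unif (m : Measure ℝ) [IsProbabilityMeasure m]
    (h : ∀ x, 0 < x → x < 1 → m (Iic x) = ENNReal.ofReal x) : m = unifMeasure := by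
  have key : ∀ m : Measure ℝ, IsProbabilityMeasure m →
      (∀ x, 0 < x → x < 1 → m (Iic x) = ENNReal.ofReal x) →
      (∀ x, x ≤ 0 → m (Iic x) = 0) ∧ (∀ x, 1 ≤ x → m (Iic x) = 1) := by
    intro m hm h
    constructor
    · intro x hx
      by_contra hne
      have hpos : 0 < m.real (Iic x) := ENNReal.toReal_pos hne (measure_ne_top _ _)
      have hle : m.real (Iic x) ≤ 1 := measureReal_le_one
      have h2 : m.real (Iic x) ≤ m.real (Iic (m.real (Iic x) / 2)) :=
        measureReal_mono (Iic_subset_Iic.2 (by linarith))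
      have h3 := h (m.real (Iic x) / 2) (by linarith) (by linarith)
      rw [measureReal_def (s := Iic (m.real (Iic x) / 2)), h3,
        ENNReal.toReal_ofReal (by linarith)] at h2
      linarith
    · intro x hx
      refine le_antisymm prob_le_one ?_
      refine ENNReal.le_of_forall_pos_le_add ?_
      intro ε hε _
      rcases lt_or_ge (ε : ℝ) 1 with hε1 | hε1
      · have hε' : (0:ℝ) < ε := hε
        have h3 := h (1 - ε) (by linarith) (by linarith)
        have h2 : m (Iic (1 - (ε:ℝ))) ≤ m (Iic x) := measure_mono (Iic_subset_Iic.2 (by linarith))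
        rw [h3] at h2
        calc (1 : ENNReal) = ENNReal.ofReal (1 - ε) + ε := by
              rw [← ENNReal.ofReal_coe_nnreal, ← ENNReal.ofReal_add (by linarith) (by linarith)]
              simp
          _ ≤ _ := by gcongr
      · have : (1 : ENNReal) ≤ ε := by exact_mod_cast hε1
        exact this.trans le_add_self
  obtain ⟨k0, k1⟩ := key m inferInstance h
  obtain ⟨l0, l1⟩ := key unifMeasure inferInstance (fun x h0 h1 => unif_Iic h0.le h1.le)
  refine Measure.ext_of_Iic _ _ fun x => ?_
  rcases le_or_gt x 0 with hx | hx
  · rw [k0 x hx, l0 x hx]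
  rcases le_or_gt 1 x with hx1 | hx1
  · rw [k1 x hx1, l1 x hx1]
  rw [h x hx hx1, unif_Iic hx.le hx1.le]

lemma continuous_cdf_of_noAtoms (ν : Measure ℝ) [IsProbabilityMeasure ν]
    (h : ∀ x, ν {x} = 0) : Continuous (cdf ν) := by
  rw [continuous_iff_continuousAt]
  intro x
  rw [(monotone_cdf ν).continuousAt_iff_leftLim_eq_rightLim, StieltjesFunction.rightLim_eq]
  have h1 := (cdf ν).measure_singleton x
  rw [measure_cdf, h x] at h1
  have h2 := ENNReal.ofReal_eq_zero.1 h1.symm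
  exact le_antisymm ((monotone_cdf ν).leftLim_le le_rfl) (by linarith)

lemma map_cdf_eq_unif (ν : Measure ℝ) [IsProbabilityMeasure ν]
    (h : ∀ x, ν {x} = 0) : Measure.map (cdf ν) ν = unifMeasure := by
  have hm : Measurable (cdf ν) := (monotone_cdf ν).measurable
  have hc := continuous_cdf_of_noAtoms ν h
  have : IsProbabilityMeasure (Measure.map (cdf ν) ν) :=
    Measure.isProbabilityMeasure_map hm.aemeasurable
  have hex : ∀ u, 0 < u → u < 1 → ∃ x, cdf ν x = u := by
    intro u h0 h1
    refine mem_range_of_exists_le_of_exists_ge hc ?_ ?_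
    · exact ((tendsto_cdf_atBot ν).eventually (eventually_le_nhds h0)).exists
    · exact ((tendsto_cdf_atTop ν).eventually (eventually_ge_nhds h1)).exists
  refine eq_unif _ fun u h0 h1 => ?_
  rw [Measure.map_apply hm measurableSet_Iic]
  refine le_antisymm ?_ ?_
  · have hle : ∀ v, u < v → v < 1 → ν (cdf ν ⁻¹' Iic u) ≤ ENNReal.ofReal v := by
      intro v huv hv
      obtain ⟨x, hx⟩ := hex v (h0.trans huv) hv
      rw [← hx, ofReal_cdf]
      refine measure_mono fun t ht => ?_
      have ht' : cdf ν t ≤ u := ht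
      by_contra hcon
      have := monotone_cdf ν (not_le.1 hcon).le
      linarith
    have ht : Tendsto ENNReal.ofReal (nhdsWithin u (Ioi u)) (nhds (ENNReal.ofReal u)) :=
      (ENNReal.continuous_ofReal.tendsto u).mono_left nhdsWithin_le_nhds
    refine ge_of_tendsto ht ?_
    filter_upwards [Ioo_mem_nhdsGT h1] with v hv using hle v hv.1 hv.2
  · obtain ⟨x, hx⟩ := hex u h0 h1
    nth_rewrite 1 [← hx]
    rw [ofReal_cdf]
    refine measure_mono fun t ht => ?_
    have := monotone_cdf ν (show t ≤ x from ht)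
    show cdf ν t ≤ u
    linarith

/-- the perturbed variable `Z* = H(G_{γ,β}(Z) + e)`, where
`H = G_{γ,β}^{-1} ∘ R` and `R` is the cdf of an independent Uniform(0,1) plus
Laplace(0,b) sum, again follows GPD(γ, β). -/
theorem perturbed_variable_follows_gpd
    {Ω : Type*} [MeasurableSpace Ω] (P : Measure Ω) [IsProbabilityMeasure P]
    {Ω' : Type*} [MeasurableSpace Ω'] (P' : Measure Ω') [IsProbabilityMeasure P']
    (γ β b : ℝ) (hγ : 0 < γ) (hβ : 0 < β) (hb : 0 < b)
    (Z e : Ω → ℝ) (hZm : Measurable Z) (hem : Measurable e)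
    (hZ : ∀ y : ℝ, (P {ω | Z ω ≤ y}).toReal = gpdCDF γ β y)
    (he : Measure.map e P = laplaceMeasure b)
    (hZe : IndepFun Z e P)
    (U e' : Ω' → ℝ) (hUm : Measurable U) (he'm : Measurable e')
    (hU : Measure.map U P' = unifMeasure)
    (he' : Measure.map e' P' = laplaceMeasure b)
    (hUe' : IndepFun U e' P')
    (R : ℝ → ℝ) (hR : ∀ x, R x = (P' {ω | U ω + e' ω ≤ x}).toReal)
    (H : ℝ → ℝ) (hH : ∀ x, H x = gpdCDFInv γ β (R x))
    (Zstar : Ω → ℝ) (hZstar : ∀ ω, Zstar ω = H (gpdCDF γ β (Z ω) + e ω)) :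
    ∀ y : ℝ, (P {ω | Zstar ω ≤ y}).toReal = gpdCDF γ β y := by
  have hG := measurable_gpd γ β
  have hGZ : Measurable (fun ω => gpdCDF γ β (Z ω)) := hG.comp hZm
  have hUe'm : Measurable (fun ω => U ω + e' ω) := hUm.add he'm
  have hV : Measure.map (fun ω => gpdCDF γ β (Z ω)) P = unifMeasure := by
    have : IsProbabilityMeasure (Measure.map (fun ω => gpdCDF γ β (Z ω)) P) :=
      Measure.isProbabilityMeasure_map hGZ.aemeasurable
    refine eq_unif _ fun x h0 h1 => ?_
    rw [Measure.map_apply hGZ measurableSet_Iic]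
    have hs : (fun ω => gpdCDF γ β (Z ω)) ⁻¹' Iic x = {ω | Z ω ≤ gpdCDFInv γ β x} := by
      ext ω
      exact le_gpdInv_iff hγ hβ h0 h1 (Z ω)
    rw [hs, ← ENNReal.ofReal_toReal (measure_ne_top P _), hZ, gpd_gpdInv hγ hβ h0 h1]
  have hLp : IsProbabilityMeasure (laplaceMeasure b) := by
    rw [← he]
    exact Measure.isProbabilityMeasure_map hem.aemeasurable
  have hadd : Measurable (fun q : ℝ × ℝ => q.1 + q.2) := by fun_prop
  set ν : Measure ℝ := Measure.map (fun q : ℝ × ℝ => q.1 + q.2)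
    (unifMeasure.prod (laplaceMeasure b)) with hν
  have hνp : IsProbabilityMeasure ν := Measure.isProbabilityMeasure_map hadd.aemeasurable
  have hW : Measure.map (fun ω => gpdCDF γ β (Z ω) + e ω) P = ν := by
    have hind : IndepFun (fun ω => gpdCDF γ β (Z ω)) e P := hZe.comp hG measurable_id
    have hpr := (indepFun_iff_map_prod_eq_prod_map_map hGZ.aemeasurable
      hem.aemeasurable).1 hind
    rw [hV, he] at hpr
    rw [hν, ← hpr, Measure.map_map hadd (hGZ.prodMk hem)]
    rfl
  have hW' : Measure.map (fun ω => U ω + e' ω) P' = ν := by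
    have hpr := (indepFun_iff_map_prod_eq_prod_map_map hUm.aemeasurable
      he'm.aemeasurable).1 hUe'
    rw [hU, he'] at hpr
    rw [hν, ← hpr, Measure.map_map hadd (hUm.prodMk he'm)]
    rfl
  have hat : ∀ x, ν {x} = 0 := by
    intro x
    rw [hν, Measure.map_apply hadd (measurableSet_singleton x),
      Measure.measure_prod_null (hadd (measurableSet_singleton x))]
    refine Filter.Eventually.of_forall fun u => ?_
    have hs : Prod.mk u ⁻¹' ((fun q : ℝ × ℝ => q.1 + q.2) ⁻¹' {x}) = {x - u} := by
      ext t
      simp only [mem_preimage, mem_singleton_iff]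
      constructor <;> intro _ <;> linarith
    show laplaceMeasure b (Prod.mk u ⁻¹' ((fun q : ℝ × ℝ => q.1 + q.2) ⁻¹' {x})) = 0
    rw [hs]
    exact withDensity_absolutelyContinuous _ _ (measure_singleton _)
  have hRc : ∀ x, R x = cdf ν x := by
    intro x
    rw [hR, cdf_eq_real, measureReal_def, ← hW', Measure.map_apply hUe'm measurableSet_Iic]
    rfl
  have hcm : Measurable (cdf ν) := (monotone_cdf ν).measurable
  have hWm : Measurable (fun ω => gpdCDF γ β (Z ω) + e ω) := hGZ.add hem
  have hT : Measure.map (fun ω => cdf ν (gpdCDF γ β (Z ω) + e ω)) P = unifMeasure := by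
    rw [← map_cdf_eq_unif ν hat]
    nth_rewrite 3 [← hW]
    rw [Measure.map_map hcm hWm]
    rfl
  have hTm : Measurable (fun ω => cdf ν (gpdCDF γ β (Z ω) + e ω)) := hcm.comp hWm
  have hae : ∀ᵐ ω ∂P, cdf ν (gpdCDF γ β (Z ω) + e ω) ∈ Ioo (0:ℝ) 1 := by
    refine ae_of_ae_map (p := fun t => t ∈ Ioo (0:ℝ) 1) hTm.aemeasurable ?_
    rw [hT]
    exact ae_restrict_mem measurableSet_Ioo
  intro y
  obtain ⟨hy0, hy1⟩ := gpd_mem hγ hβ y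
  have hfin : P {ω | Zstar ω ≤ y} =
      P ((fun ω => cdf ν (gpdCDF γ β (Z ω) + e ω)) ⁻¹' Iic (gpdCDF γ β y)) := by
    refine measure_congr ?_
    filter_upwards [hae] with ω hω
    refine propext ?_
    show Zstar ω ≤ y ↔ cdf ν (gpdCDF γ β (Z ω) + e ω) ≤ gpdCDF γ β y
    rw [hZstar, hH, hRc]
    exact gpdInv_le_iff hγ hβ hω.1 hω.2 y
  rw [hfin, ← Measure.map_apply hTm measurableSet_Iic, hT, unif_Iic hy0 hy1,
    ENNReal.toReal_ofReal hy0]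

end
end

section
/- Let b > 0 and k ≥ 1. For an input vector v = (v_1,…,v_k) ∈ [0,1]^k, let M(v) = (v_1 + e_1, …, v_k + e_k), where e_1,…,e_k are independent Laplace(0,b) random variables. Then for any two inputs v, v′ ∈ [0,1]^k that differ in exactly one coordinate and any Borel set B ⊆ ℝ^k, P(M(v) ∈ B) ≤ e^{b} · P(M(v′) ∈ B). That is, the Laplace noise-addition mechanism on [0,1]^k satisfies b-differential privacy. -/
open MeasureTheory ProbabilityTheory Real Set

noncomputable section

theorem lap_shift_apply (b a : ℝ) (s : Set ℝ) (hs : MeasurableSet s) :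
    Measure.map (fun x => a + x) (laplaceMeasure b) s
      = ∫⁻ y in s, ENNReal.ofReal (laplacePDF b (y - a)) := by
  have hm : Measurable (fun x : ℝ => a + x) := by fun_prop
  rw [Measure.map_apply hm hs, laplaceMeasure, withDensity_apply _ (hm hs),
    ← lintegral_indicator (hm hs), ← lintegral_indicator hs,
    ← lintegral_add_left_eq_self (s.indicator _) a]
  refine lintegral_congr fun x => ?_
  by_cases h : a + x ∈ s <;> simp [Set.indicator, h]

theorem lap_shift_le (b : ℝ) (hb : 0 < b) (a a' : ℝ) (ha : a ∈ Set.Icc (0:ℝ) 1)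
    (ha' : a' ∈ Set.Icc (0:ℝ) 1) (s : Set ℝ) (hs : MeasurableSet s) :
    Measure.map (fun x => a + x) (laplaceMeasure b) s
      ≤ ENNReal.ofReal (Real.exp b) * Measure.map (fun x => a' + x) (laplaceMeasure b) s := by
  rw [lap_shift_apply b a s hs, lap_shift_apply b a' s hs,
    ← lintegral_const_mul' _ _ ENNReal.ofReal_ne_top]
  refine lintegral_mono fun y => ?_
  rw [← ENNReal.ofReal_mul (Real.exp_pos b).le]
  refine ENNReal.ofReal_le_ofReal ?_
  unfold laplacePDF
  rw [mul_left_comm, ← Real.exp_add]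
  refine mul_le_mul_of_nonneg_left (Real.exp_le_exp.2 ?_) (by positivity)
  have h : |y - a'| ≤ |y - a| + 1 := by
    have h1 : |y - a'| ≤ |y - a| + |a - a'| := abs_sub_le _ _ _
    have h2 : |a - a'| ≤ 1 := abs_le.2 ⟨by linarith [ha.1, ha'.2], by linarith [ha.2, ha'.1]⟩
    linarith
  nlinarith

theorem pi_le_of_one (n : ℕ) (ν ν' : Fin (n+1) → Measure ℝ) [∀ j, IsProbabilityMeasure (ν j)]
    [∀ j, IsProbabilityMeasure (ν' j)] (i : Fin (n+1)) (h : ∀ j, j ≠ i → ν j = ν' j)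
    (c : ENNReal) (hc : c ≠ ⊤) (hi : ∀ s, MeasurableSet s → ν i s ≤ c * ν' i s)
    (B : Set (Fin (n+1) → ℝ)) (hB : MeasurableSet B) :
    Measure.pi ν B ≤ c * Measure.pi ν' B := by
  have h1 := (measurePreserving_piFinSuccAbove ν i).symm
  have h2 := (measurePreserving_piFinSuccAbove ν' i).symm
  rw [← h1.measure_preimage hB.nullMeasurableSet, ← h2.measure_preimage hB.nullMeasurableSet]
  have hr : (fun j => ν (i.succAbove j)) = fun j => ν' (i.succAbove j) :=
    funext fun j => h _ (Fin.succAbove_ne i j)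
  have hm := h1.measurable hB
  rw [Measure.prod_apply_symm hm, Measure.prod_apply_symm hm,
    ← lintegral_const_mul' _ _ hc]
  simp only [hr]
  exact lintegral_mono fun y => hi _ (measurable_prodMk_right hm)

/-- the Laplace noise-addition mechanism `M(v) = (v_1 + e_1, …, v_k + e_k)` on
`[0,1]^k`, with `e_1, …, e_k` i.i.d. Laplace(0,b), satisfies `b`-differential privacy: for
inputs `v, v'` in `[0,1]^k` differing in exactly one coordinate and any Borel set `B`,
`P(M(v) ∈ B) ≤ e^b P(M(v') ∈ B)`. -/
theorem laplace_mechanism_differentially_private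
    {Ω : Type*} [MeasurableSpace Ω] (P : Measure Ω) [IsProbabilityMeasure P]
    (b : ℝ) (hb : 0 < b) (k : ℕ) (hk : 1 ≤ k)
    (e : Fin k → Ω → ℝ) (hem : ∀ j, Measurable (e j))
    (hind : iIndepFun e P)
    (hlaw : ∀ j, Measure.map (e j) P = laplaceMeasure b)
    (v v' : Fin k → ℝ)
    (hv : ∀ j, v j ∈ Set.Icc (0:ℝ) 1) (hv' : ∀ j, v' j ∈ Set.Icc (0:ℝ) 1)
    (hdiff : ∃ i₀ : Fin k, (∀ j, j ≠ i₀ → v j = v' j))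
    (B : Set (Fin k → ℝ)) (hB : MeasurableSet B) :
    P {ω | (fun j => v j + e j ω) ∈ B} ≤
      ENNReal.ofReal (Real.exp b) * P {ω | (fun j => v' j + e j ω) ∈ B} := by
  obtain ⟨i₀, hi₀⟩ := hdiff
  obtain ⟨n, rfl⟩ : ∃ n, k = n + 1 := ⟨k - 1, by omega⟩
  have key : ∀ w : Fin (n+1) → ℝ, P {ω | (fun j => w j + e j ω) ∈ B}
      = Measure.pi (fun j => Measure.map (fun x => w j + x) (laplaceMeasure b)) B := by
    intro w
    have hi : iIndepFun (fun j ω => w j + e j ω) P :=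
      hind.comp (fun j x => w j + x) (fun j => by fun_prop)
    have hm : ∀ j, Measurable (fun ω => w j + e j ω) := fun j => (hem j).const_add _
    have h := (iIndepFun_iff_map_fun_eq_pi_map (fun j => (hm j).aemeasurable)).1 hi
    have h' : (fun j => Measure.map (fun x => w j + x) (laplaceMeasure b))
        = fun j => Measure.map (fun ω => w j + e j ω) P := by
      funext j
      rw [← hlaw j, Measure.map_map (by fun_prop) (hem j)]
      rfl
    rw [h', ← h, Measure.map_apply (measurable_pi_lambda _ hm) hB]
    rfl
  haveI : IsProbabilityMeasure (laplaceMeasure b) := by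
    rw [← hlaw i₀]
    exact Measure.isProbabilityMeasure_map (hem i₀).aemeasurable
  haveI : ∀ a : ℝ, IsProbabilityMeasure (Measure.map (fun x => a + x) (laplaceMeasure b)) :=
    fun a => Measure.isProbabilityMeasure_map (by fun_prop)
  rw [key v, key v']
  exact pi_le_of_one n _ _ i₀ (fun j hj => by rw [hi₀ j hj]) _ ENNReal.ofReal_ne_top
    (fun s hs => lap_shift_le b hb _ _ (hv i₀) (hv' i₀) s hs) B hB

end
end

section
/- (Theorem 3) Let γ > 0, β > 0, b > 0, k ≥ 1, and set θ = (γ,β). Define the perturbation mechanism that maps an input z = (z_1,…,z_k) ∈ (0,∞)^k to Z* = (H(G_θ(z_1) + e_1), …, H(G_θ(z_k) + e_k)), where e_1,…,e_k are independent Laplace(0,b) random variables, G_θ is the cdf of GPD(γ,β), H = G_θ^{−1} ∘ R, and R is the cdf of U + e with U ~ Uniform(0,1) independent of e ~ Laplace(0,b). Then for any two inputs z, z′ ∈ (0,∞)^k differing in exactly one coordinate and any Borel set B ⊆ ℝ^k, P(Z*(z) ∈ B) ≤ e^{b} · P(Z*(z′) ∈ B); that is, the mechanism is b-differentially private. -/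
open MeasureTheory ProbabilityTheory Real Set

noncomputable section

theorem lap_shift (b a : ℝ) (A : Set ℝ) (hA : MeasurableSet A) :
    (laplaceMeasure b).map (fun x => a + x) A =
      ∫⁻ y in A, ENNReal.ofReal (laplacePDF b (y - a)) := by
  have hm : Measurable (fun x : ℝ => a + x) := by fun_prop
  rw [Measure.map_apply hm hA, laplaceMeasure, withDensity_apply _ (hm hA),
    ← lintegral_indicator (hm hA), ← lintegral_indicator hA,
    ← lintegral_add_left_eq_self (A.indicator _) a]
  congr 1
  ext x
  by_cases h : a + x ∈ A <;> simp [Set.indicator, h]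

theorem lap_le (b : ℝ) (hb : 0 < b) (a a' : ℝ) (h : |a - a'| ≤ 1) :
    (laplaceMeasure b).map (fun x => a + x) ≤
      ENNReal.ofReal (Real.exp b) • (laplaceMeasure b).map (fun x => a' + x) := by
  rw [Measure.le_iff]
  intro A hA
  rw [Measure.smul_apply, lap_shift b a A hA, lap_shift b a' A hA, smul_eq_mul,
    ← lintegral_const_mul' _ _ ENNReal.ofReal_ne_top]
  refine lintegral_mono fun y => ?_
  dsimp only
  rw [← ENNReal.ofReal_mul (Real.exp_pos b).le]
  apply ENNReal.ofReal_le_ofReal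
  unfold laplacePDF
  have h1 : |y - a'| ≤ |y - a| + |a - a'| := abs_sub_le _ _ _
  have h2 : Real.exp (-b * |y - a|) ≤ Real.exp b * Real.exp (-b * |y - a'|) := by
    rw [← Real.exp_add]
    apply Real.exp_le_exp.2
    nlinarith
  calc b / 2 * Real.exp (-b * |y - a|)
      ≤ b / 2 * (Real.exp b * Real.exp (-b * |y - a'|)) := by gcongr
    _ = _ := by ring

theorem gpdCDF_mem (γ β y : ℝ) (hγ : 0 < γ) (hβ : 0 < β) (hy : 0 < y) :
    0 ≤ gpdCDF γ β y ∧ gpdCDF γ β y ≤ 1 := by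
  have h1 : (1 : ℝ) ≤ 1 + γ * y / β := by
    have : 0 < γ * y / β := by positivity
    linarith
  have h2 : (1 + γ * y / β) ^ (-(1 / γ)) ≤ 1 :=
    Real.rpow_le_one_of_one_le_of_nonpos h1 (by have : 0 < 1 / γ := by positivity
                                                linarith)
  have h3 : 0 ≤ (1 + γ * y / β) ^ (-(1 / γ)) := Real.rpow_nonneg (by linarith) _
  unfold gpdCDF
  rw [if_neg (not_lt.2 hy.le)]
  constructor <;> linarith

theorem pi_le {n : ℕ} (i₀ : Fin (n + 1)) (ν ν' : Fin (n + 1) → Measure ℝ)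
    [∀ i, IsProbabilityMeasure (ν i)] [∀ i, IsProbabilityMeasure (ν' i)]
    (c : ENNReal) (h : ν i₀ ≤ c • ν' i₀) (heq : ∀ j, j ≠ i₀ → ν j = ν' j)
    (S : Set (Fin (n + 1) → ℝ)) (hS : MeasurableSet S) :
    Measure.pi ν S ≤ c * Measure.pi ν' S := by
  have m1 := (measurePreserving_piFinSuccAbove ν i₀).symm
  have m2 := (measurePreserving_piFinSuccAbove ν' i₀).symm
  rw [← m1.measure_preimage hS.nullMeasurableSet, ← m2.measure_preimage hS.nullMeasurableSet]
  have : (fun j => ν (i₀.succAbove j)) = fun j => ν' (i₀.succAbove j) := by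
    ext1 j
    exact heq _ (Fin.succAbove_ne _ _)
  rw [this]
  have hS' := m2.measurable hS
  rw [Measure.prod_apply hS', Measure.prod_apply hS']
  refine (lintegral_mono' h le_rfl).trans ?_
  rw [lintegral_smul_measure, smul_eq_mul]

/-- Theorem 3: with known parameter `θ = (γ, β)`, the perturbation mechanism
`z ↦ (H(G_θ(z_1) + e_1), …, H(G_θ(z_k) + e_k))`, with `H = G_θ^{-1} ∘ R` and `R` the cdf of
an independent Uniform(0,1) plus Laplace(0,b) sum, is `b`-differentially private. -/
theorem gpd_perturbation_mechanism_differentially_private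
    {Ω : Type*} [MeasurableSpace Ω] (P : Measure Ω) [IsProbabilityMeasure P]
    {Ω' : Type*} [MeasurableSpace Ω'] (P' : Measure Ω') [IsProbabilityMeasure P']
    (γ β b : ℝ) (hγ : 0 < γ) (hβ : 0 < β) (hb : 0 < b) (k : ℕ) (hk : 1 ≤ k)
    (e : Fin k → Ω → ℝ) (hem : ∀ j, Measurable (e j))
    (hind : iIndepFun e P)
    (hlaw : ∀ j, Measure.map (e j) P = laplaceMeasure b)
    (U e' : Ω' → ℝ) (hUm : Measurable U) (he'm : Measurable e')
    (hU : Measure.map U P' = unifMeasure)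
    (he' : Measure.map e' P' = laplaceMeasure b)
    (hUe' : IndepFun U e' P')
    (R : ℝ → ℝ) (hR : ∀ x, R x = (P' {ω | U ω + e' ω ≤ x}).toReal)
    (H : ℝ → ℝ) (hH : ∀ x, H x = gpdCDFInv γ β (R x))
    (z z' : Fin k → ℝ) (hz : ∀ j, 0 < z j) (hz' : ∀ j, 0 < z' j)
    (hdiff : ∃ i₀ : Fin k, (∀ j, j ≠ i₀ → z j = z' j))
    (B : Set (Fin k → ℝ)) (hB : MeasurableSet B) :
    P {ω | (fun j => H (gpdCDF γ β (z j) + e j ω)) ∈ B} ≤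
      ENNReal.ofReal (Real.exp b) *
        P {ω | (fun j => H (gpdCDF γ β (z' j) + e j ω)) ∈ B} := by
  obtain ⟨i₀, hi₀⟩ := hdiff
  obtain ⟨n, rfl⟩ : ∃ n, k = n + 1 := ⟨k - 1, by omega⟩
  have hRm : Monotone R := by
    intro x y hxy
    rw [hR, hR]
    apply ENNReal.toReal_mono (measure_ne_top _ _)
    apply measure_mono
    intro ω hω
    exact le_trans hω hxy
  have hHm : Measurable H := by
    have : H = fun x => gpdCDFInv γ β (R x) := funext hH
    rw [this]
    have := hRm.measurable
    unfold gpdCDFInv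
    fun_prop
  set S : Set (Fin (n + 1) → ℝ) := (fun x j => H (x j)) ⁻¹' B with hSdef
  have hS : MeasurableSet S := by
    have : Measurable (fun (x : Fin (n + 1) → ℝ) j => H (x j)) := by fun_prop
    exact this hB
  have key : ∀ w : Fin (n + 1) → ℝ,
      P {ω | (fun j => H (gpdCDF γ β (w j) + e j ω)) ∈ B} =
        Measure.pi (fun j => P.map (fun ω => gpdCDF γ β (w j) + e j ω)) S := by
    intro w
    have hm : ∀ j, Measurable (fun ω => gpdCDF γ β (w j) + e j ω) := fun j =>
      (hem j).const_add _
    have hi : iIndepFun (fun j ω => gpdCDF γ β (w j) + e j ω) P :=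
      hind.comp (fun j x => gpdCDF γ β (w j) + x) (fun j => by fun_prop)
    rw [← (iIndepFun_iff_map_fun_eq_pi_map (fun j => (hm j).aemeasurable)).1 hi,
      Measure.map_apply (measurable_pi_lambda _ hm) hS]
    rfl
  have hlaw' : ∀ (a : ℝ) j, P.map (fun ω => a + e j ω) =
      (laplaceMeasure b).map (fun x => a + x) := by
    intro a j
    rw [← hlaw j, Measure.map_map (by fun_prop) (hem j)]
    rfl
  rw [key z, key z']
  have hp : ∀ (w : Fin (n + 1) → ℝ) j,
      IsProbabilityMeasure (P.map (fun ω => gpdCDF γ β (w j) + e j ω)) := fun w j =>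
    Measure.isProbabilityMeasure_map ((hem j).const_add _).aemeasurable
  have := hp z
  have := hp z'
  refine pi_le i₀ _ _ _ ?_ ?_ S hS
  · rw [hlaw', hlaw']
    apply lap_le b hb
    have h1 := gpdCDF_mem γ β (z i₀) hγ hβ (hz i₀)
    have h2 := gpdCDF_mem γ β (z' i₀) hγ hβ (hz' i₀)
    rw [abs_le]
    constructor <;> linarith [h1.1, h1.2, h2.1, h2.2]
  · intro j hj
    rw [hi₀ j hj]

end
end

section
/- Let (W(s))_{s∈[0,1]} be a jointly measurable, centered stochastic process with E[W(s)W(t)] = min(s,t) for all s,t ∈ [0,1] (in particular E[W(s)²] = s). Then almost surely the integral ∫₀¹ |W(s)|/s ds is finite, and the random variable X = ∫₀¹ ( W(s)/s − W(1) ) ds satisfies E[X] = 0 and E[X²] = 1. -/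
open MeasureTheory ProbabilityTheory Real Set Filter

noncomputable section

lemma hill_kernel_inner (t : ℝ) (ht : t ∈ Set.Ioc (0:ℝ) 1) :
    ∫ s in Set.Ioc (0:ℝ) 1, (1 / max t s - 1) = - Real.log t := by
  obtain ⟨h0, h1⟩ := ht
  rw [← intervalIntegral.integral_of_le zero_le_one]
  have hc : Continuous fun s : ℝ => 1 / max t s - 1 := by
    refine Continuous.sub (Continuous.div continuous_const (by fun_prop) ?_) continuous_const
    intro s
    have := le_max_left t s
    exact (lt_of_lt_of_le h0 this).ne'
  rw [← intervalIntegral.integral_add_adjacent_intervals (b := t)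
    (hc.intervalIntegrable _ _) (hc.intervalIntegrable _ _)]
  have e1 : ∫ s in (0:ℝ)..t, (1 / max t s - 1) = ∫ s in (0:ℝ)..t, (1 / t - 1) := by
    apply intervalIntegral.integral_congr
    intro s hs
    rw [uIcc_of_le h0.le] at hs
    simp only [max_eq_left hs.2]
  have e2 : ∫ s in t..1, (1 / max t s - 1) = ∫ s in t..1, (1 / s - 1) := by
    apply intervalIntegral.integral_congr
    intro s hs
    rw [uIcc_of_le h1] at hs
    simp only [max_eq_right hs.1]
  have hn : (0:ℝ) ∉ uIcc t 1 := by
    rw [uIcc_of_le h1]; intro h; linarith [h.1]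
  rw [e1, e2, intervalIntegral.integral_const, intervalIntegral.integral_sub _ intervalIntegrable_const, integral_one_div hn]
  · simp
    field_simp
    ring
  · refine intervalIntegral.intervalIntegrable_one_div (fun x hx h => hn (h ▸ hx)) continuousOn_id

lemma hill_neglog : ∫ t in Set.Ioc (0:ℝ) 1, (- Real.log t) = 1 := by
  rw [← intervalIntegral.integral_of_le zero_le_one]
  simp

/-- for a jointly measurable centered process `W` on `[0,1]` with the
Brownian-motion covariance `E[W(s)W(t)] = min(s,t)`, the integral `∫₀¹ |W(s)|/s ds` is
almost surely finite, and `X = ∫₀¹ (W(s)/s - W(1)) ds` satisfies `E[X] = 0` and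
`E[X²] = 1`. -/
theorem brownian_hill_limit_mean_zero_variance_one
    {Ω : Type*} [MeasurableSpace Ω] (P : Measure Ω) [IsProbabilityMeasure P]
    (W : ℝ → Ω → ℝ)
    (hjm : Measurable (Function.uncurry W))
    (hL2 : ∀ s ∈ Set.Icc (0:ℝ) 1, MemLp (W s) 2 P)
    (hmean : ∀ s ∈ Set.Icc (0:ℝ) 1, ∫ ω, W s ω ∂P = 0)
    (hcov : ∀ s ∈ Set.Icc (0:ℝ) 1, ∀ t ∈ Set.Icc (0:ℝ) 1,
      ∫ ω, W s ω * W t ω ∂P = min s t) :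
    (∀ᵐ ω ∂P, IntegrableOn (fun s => |W s ω| / s) (Set.Ioc 0 1) volume) ∧
    (∫ ω, (∫ s in Set.Ioc (0:ℝ) 1, (W s ω / s - W 1 ω)) ∂P = 0) ∧
    (∫ ω, (∫ s in Set.Ioc (0:ℝ) 1, (W s ω / s - W 1 ω)) ^ 2 ∂P = 1) := by
  set μ : Measure ℝ := volume.restrict (Set.Ioc 0 1) with hμ
  haveI : IsProbabilityMeasure μ := ⟨by simp [hμ]⟩
  have hone : (1:ℝ) ∈ Set.Icc (0:ℝ) 1 := ⟨zero_le_one, le_rfl⟩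
  have hmem : ∀ᵐ s ∂μ, s ∈ Set.Ioc (0:ℝ) 1 := ae_restrict_mem measurableSet_Ioc
  set Z : ℝ → Ω → ℝ := fun s ω => W s ω / s - W 1 ω with hZ
  have hW1 : Measurable (W 1) := hjm.comp (by fun_prop : Measurable fun ω : Ω => ((1:ℝ), ω))
  have hZm : Measurable (Function.uncurry Z) :=
    (hjm.div measurable_fst).sub (hW1.comp measurable_snd)
  have hZ2 : ∀ s ∈ Set.Ioc (0:ℝ) 1, MemLp (Z s) 2 P := by
    intro s hs
    have h := ((hL2 s ⟨hs.1.le, hs.2⟩).mul_const s⁻¹).sub (hL2 1 hone)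
    exact h
  have hZmean : ∀ s ∈ Set.Ioc (0:ℝ) 1, ∫ ω, Z s ω ∂P = 0 := by
    intro s hs
    have hs' : s ∈ Set.Icc (0:ℝ) 1 := ⟨hs.1.le, hs.2⟩
    simp only [hZ]
    rw [integral_sub (((hL2 s hs').integrable one_le_two).div_const s)
      ((hL2 1 hone).integrable one_le_two), integral_div, hmean s hs', hmean 1 hone]
    simp
  have hZcov : ∀ s ∈ Set.Ioc (0:ℝ) 1, ∀ t ∈ Set.Ioc (0:ℝ) 1,
      ∫ ω, Z s ω * Z t ω ∂P = 1 / max s t - 1 := by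
    intro s hs t ht
    have hs' : s ∈ Set.Icc (0:ℝ) 1 := ⟨hs.1.le, hs.2⟩
    have ht' : t ∈ Set.Icc (0:ℝ) 1 := ⟨ht.1.le, ht.2⟩
    have e : ∀ ω, Z s ω * Z t ω = (1 / (s * t)) * (W s ω * W t ω) - (1 / s) * (W s ω * W 1 ω)
        - (1 / t) * (W 1 ω * W t ω) + W 1 ω * W 1 ω := by
      intro ω
      have := hs.1.ne'
      have := ht.1.ne'
      simp only [hZ]
      field_simp
      ring
    have i1 : Integrable (fun ω => (1 / (s * t)) * (W s ω * W t ω)) P :=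
      ((hL2 s hs').integrable_mul (hL2 t ht')).const_mul _
    have i2 : Integrable (fun ω => (1 / s) * (W s ω * W 1 ω)) P :=
      ((hL2 s hs').integrable_mul (hL2 1 hone)).const_mul _
    have i3 : Integrable (fun ω => (1 / t) * (W 1 ω * W t ω)) P :=
      ((hL2 1 hone).integrable_mul (hL2 t ht')).const_mul _
    have i4 : Integrable (fun ω => W 1 ω * W 1 ω) P :=
      ((hL2 1 hone).integrable_mul (hL2 1 hone))
    have i12 : Integrable (fun ω => (1 / (s * t)) * (W s ω * W t ω)
        - (1 / s) * (W s ω * W 1 ω)) P := i1.sub i2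
    have i123 : Integrable (fun ω => (1 / (s * t)) * (W s ω * W t ω)
        - (1 / s) * (W s ω * W 1 ω) - (1 / t) * (W 1 ω * W t ω)) P := i12.sub i3
    simp_rw [e]
    rw [integral_add i123 i4, integral_sub i12 i3, integral_sub i1 i2,
      integral_const_mul, integral_const_mul, integral_const_mul, hcov s hs' t ht',
      hcov s hs' 1 hone, hcov 1 hone t ht', hcov 1 hone 1 hone]
    have hsp := hs.1
    have htp := ht.1
    rw [min_eq_left hs.2, min_eq_right ht.2]
    rcases le_total s t with h | h
    · rw [min_eq_left h, max_eq_right h]; simp; field_simp; ring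
    · rw [min_eq_right h, max_eq_left h]; simp; field_simp; ring
  have hsq : ∀ s ∈ Set.Ioc (0:ℝ) 1, s * ∫ ω, Z s ω * Z s ω ∂P ≤ 1 := by
    intro s hs
    rw [hZcov s hs s hs, max_self, mul_sub, mul_one_div_cancel hs.1.ne']
    linarith [hs.1]
  have hgi : Integrable (fun s : ℝ => (√s)⁻¹) μ := by
    have h : IntervalIntegrable (fun x : ℝ => x ^ (-(1/2) : ℝ)) volume 0 1 :=
      intervalIntegral.intervalIntegrable_rpow' (by norm_num)
    rw [intervalIntegrable_iff_integrableOn_Ioc_of_le zero_le_one] at h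
    refine h.congr ?_
    filter_upwards [hmem] with s hs
    rw [Real.rpow_neg hs.1.le, Real.sqrt_eq_rpow]
  -- integrability of Z
  have hZi : Integrable (Function.uncurry Z) (μ.prod P) := by
    rw [integrable_prod_iff hZm.aestronglyMeasurable]
    refine ⟨?_, ?_⟩
    · filter_upwards [hmem] with s hs
      exact (hZ2 s hs).integrable one_le_two
    · refine hgi.mono' hZm.norm.stronglyMeasurable.integral_prod_right.aestronglyMeasurable ?_
      filter_upwards [hmem] with s hs
      have hr : 0 < √s := Real.sqrt_pos.2 hs.1
      have hrr : √s * √s = s := Real.mul_self_sqrt hs.1.le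
      have iab : Integrable (fun ω => |Z s ω|) P := ((hZ2 s hs).integrable one_le_two).abs
      have iaa : Integrable (fun ω => Z s ω * Z s ω) P := (hZ2 s hs).integrable_mul (hZ2 s hs)
      have key : √s * ∫ ω, |Z s ω| ∂P ≤ 1 := by
        have h : ∫ ω, √s * |Z s ω| ∂P ≤ ∫ ω, (s / 2 * (Z s ω * Z s ω) + 1 / 2) ∂P := by
          refine integral_mono (iab.const_mul _) ((iaa.const_mul _).add (integrable_const _)) ?_
          intro ω
          have h1 := sq_nonneg (√s * |Z s ω| - 1)
          have h2 : (√s * |Z s ω|) ^ 2 = s * (Z s ω * Z s ω) := by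
            rw [mul_pow, sq_abs, Real.sq_sqrt hs.1.le]; ring
          simp only
          nlinarith
        rw [integral_const_mul, integral_add (iaa.const_mul _) (integrable_const _),
          integral_const_mul] at h
        simp at h
        linarith [hsq s hs]
      rw [Real.norm_of_nonneg (integral_nonneg fun ω => norm_nonneg _)]
      rw [← one_div, le_div_iff₀ hr, mul_comm]
      exact key
  have hFm : Measurable (fun p : Ω × (ℝ × ℝ) => Z p.2.1 p.1 * Z p.2.2 p.1) :=
    (hZm.comp (by fun_prop : Measurable fun p : Ω × (ℝ × ℝ) => (p.2.1, p.1))).mul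
      (hZm.comp (by fun_prop : Measurable fun p : Ω × (ℝ × ℝ) => (p.2.2, p.1)))
  have hmem1 : ∀ᵐ p ∂(μ.prod μ), p.1 ∈ Set.Ioc (0:ℝ) 1 :=
    Measure.quasiMeasurePreserving_fst.ae hmem
  have hmem2 : ∀ᵐ p ∂(μ.prod μ), p.2 ∈ Set.Ioc (0:ℝ) 1 :=
    Measure.quasiMeasurePreserving_snd.ae hmem
  have hFi : Integrable (fun p : Ω × (ℝ × ℝ) => Z p.2.1 p.1 * Z p.2.2 p.1)
      (P.prod (μ.prod μ)) := by
    rw [integrable_prod_iff' hFm.aestronglyMeasurable]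
    refine ⟨?_, ?_⟩
    · filter_upwards [hmem1, hmem2] with p h1 h2
      exact (hZ2 _ h1).integrable_mul (hZ2 _ h2)
    · refine (hgi.mul_prod hgi).mono'
        hFm.norm.stronglyMeasurable.integral_prod_left'.aestronglyMeasurable ?_
      filter_upwards [hmem1, hmem2] with p hs ht
      obtain ⟨s, t⟩ := p
      simp only at hs ht ⊢
      have hr : 0 < √s := Real.sqrt_pos.2 hs.1
      have hr' : 0 < √t := Real.sqrt_pos.2 ht.1
      have iab : Integrable (fun ω => |Z s ω * Z t ω|) P :=
        ((hZ2 s hs).integrable_mul (hZ2 t ht)).abs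
      have iaa : Integrable (fun ω => Z s ω * Z s ω) P := (hZ2 s hs).integrable_mul (hZ2 s hs)
      have ibb : Integrable (fun ω => Z t ω * Z t ω) P := (hZ2 t ht).integrable_mul (hZ2 t ht)
      have key : (√s * √t) * ∫ ω, |Z s ω * Z t ω| ∂P ≤ 1 := by
        have h : ∫ ω, (√s * √t) * |Z s ω * Z t ω| ∂P
            ≤ ∫ ω, (s / 2 * (Z s ω * Z s ω) + t / 2 * (Z t ω * Z t ω)) ∂P := by
          refine integral_mono (iab.const_mul _) ((iaa.const_mul _).add (ibb.const_mul _)) ?_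
          intro ω
          have h1 := sq_nonneg (√s * |Z s ω| - √t * |Z t ω|)
          have h2 : (√s * |Z s ω|) ^ 2 = s * (Z s ω * Z s ω) := by
            rw [mul_pow, sq_abs, Real.sq_sqrt hs.1.le]; ring
          have h3 : (√t * |Z t ω|) ^ 2 = t * (Z t ω * Z t ω) := by
            rw [mul_pow, sq_abs, Real.sq_sqrt ht.1.le]; ring
          simp only [abs_mul]
          nlinarith
        rw [integral_const_mul, integral_add (iaa.const_mul _) (ibb.const_mul _),
          integral_const_mul, integral_const_mul] at h
        linarith [hsq s hs, hsq t ht]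
      rw [Real.norm_of_nonneg (integral_nonneg fun ω => norm_nonneg _)]
      rw [← mul_inv, ← one_div, le_div_iff₀ (mul_pos hr hr'), mul_comm]
      exact key
  refine ⟨?_, ?_, ?_⟩
  · filter_upwards [hZi.prod_left_ae] with ω hω
    have h : Integrable (fun s => |Z s ω + W 1 ω|) μ := (hω.add (integrable_const (W 1 ω))).abs
    refine h.congr ?_
    filter_upwards [hmem] with s hs
    simp only [hZ, sub_add_cancel, abs_div, abs_of_pos hs.1]
  · have h := integral_integral_swap hZi
    change ∫ ω, ∫ s, Z s ω ∂μ ∂P = 0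
    rw [← h]
    refine integral_eq_zero_of_ae ?_
    filter_upwards [hmem] with s hs
    exact hZmean s hs
  · change ∫ ω, (∫ s, Z s ω ∂μ) ^ 2 ∂P = 1
    have e : ∀ ω, (∫ s, Z s ω ∂μ) ^ 2 = ∫ p, Z p.1 ω * Z p.2 ω ∂(μ.prod μ) := by
      intro ω
      rw [sq, integral_prod_mul (fun s => Z s ω) (fun s => Z s ω)]
    simp_rw [e]
    rw [integral_integral_swap (f := fun ω (p : ℝ × ℝ) => Z p.1 ω * Z p.2 ω) hFi,
      integral_prod _ hFi.integral_prod_right, ← hill_neglog]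
    refine integral_congr_ae ?_
    filter_upwards [hmem] with s hs
    rw [← hill_kernel_inner s hs]
    refine integral_congr_ae ?_
    filter_upwards [hmem] with t ht
    exact hZcov s hs t ht

end
end
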